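/- Let γ, μ > 0, m, n ∈ ℕ*, and for i = 1,…,m let yᵢ ∈ {+1, −1} and aᵢ ∈ ℝⁿ with ‖aᵢ‖₂ = 1. Let M₂ := [y₁a₁ ⋯ y_m a_m]ᵀ ∈ ℝ^{m×n}, Ψ(z) := Σ_{i=1}^m max(0, −zᵢ), and define F(x) := ½‖x‖₂² − μ·(⁽γ⁾Ψ)(M₂x − 1_m). Then: F is convex if μ·λ_max(M₂ᵀM₂) ≤ γ; and if additionally either (i) range M₂ = ℝᵐ or (ii) γ > 1, then F is convex if and only if μ·λ_max(M₂ᵀM₂) ≤ γ. -/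

import Mathlib

/-!
The proof treats a general matrix `M`. Write `e` for the envelope of `Ψ`.

Sufficiency: `e w` is an infimum over `z` of `Ψ z + ‖w - z‖² / (2γ)`, so `F` is a supremum over `z` of
quadratic functions of `x`, all with Hessian `1 - (μ/γ) MᵀM`. This Hessian is positive semidefinite
when `μ λ_max(MᵀM) ≤ γ` (`norm_sq_toEuclideanLin_le`), hence `F` is convex (`convexOn_of_le`).

Necessity: on the box `[-γ, 0]ᵐ` one has `e w = ‖w‖² / (2γ)` (`hingeEnv_eq`). Under either additional
hypothesis some `x₀` has `M x₀ - 1` in the interior of the box: by surjectivity one can reach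
`M x₀ - 1 = -(γ/2) 1`, while for `γ > 1` the point `x₀ = 0` works. Near `x₀` the function `F` is
quadratic with Hessian `1 - (μ/γ) MᵀM`, and convexity along an eigenvector of `MᵀM` bounds its
eigenvalue by `γ/μ` (`eigenvalue_le_of_convexOn`).
-/

open Matrix
open scoped RealInnerProductSpace

noncomputable section

/-- The Moreau envelope with parameter `γ` of the hinge-type function `z ↦ ∑ i, max 0 (-(z i))`. -/
def hingeEnv {m : ℕ} (γ : ℝ) (w : EuclideanSpace ℝ (Fin m)) : ℝ :=
  ⨅ z : EuclideanSpace ℝ (Fin m), ((∑ i, max 0 (-(z i))) + ‖w - z‖ ^ 2 / (2 * γ))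

theorem hingeEnv_le {m : ℕ} {γ : ℝ} (hγ : 0 < γ) (w z : EuclideanSpace ℝ (Fin m)) :
    hingeEnv γ w ≤ (∑ i, max 0 (-(z i))) + ‖w - z‖ ^ 2 / (2 * γ) := by
  refine ciInf_le (f := fun z : EuclideanSpace ℝ (Fin m) =>
    (∑ i, max 0 (-(z i))) + ‖w - z‖ ^ 2 / (2 * γ)) ⟨0, ?_⟩ z
  rintro _ ⟨z, rfl⟩
  have : 0 ≤ ∑ i, max 0 (-(z i)) := Finset.sum_nonneg fun i _ => le_max_left _ _
  positivity

/-- On the box `[-γ, 0]ᵐ` the infimum defining the envelope is attained at `z = 0`. -/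
theorem hingeEnv_eq {m : ℕ} {γ : ℝ} (hγ : 0 < γ) (w : EuclideanSpace ℝ (Fin m))
    (hw : ∀ i, -γ ≤ w i ∧ w i ≤ 0) : hingeEnv γ w = ‖w‖ ^ 2 / (2 * γ) := by
  apply le_antisymm
  · simpa using hingeEnv_le hγ w 0
  · refine le_ciInf fun z => ?_
    rw [EuclideanSpace.real_norm_sq_eq, EuclideanSpace.real_norm_sq_eq, Finset.sum_div,
      Finset.sum_div, ← Finset.sum_add_distrib]
    refine Finset.sum_le_sum fun i _ => ?_
    obtain ⟨h1, h2⟩ := hw i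
    rw [← sub_le_iff_le_add, ← sub_div, div_le_iff₀ (by positivity)]
    simp only [PiLp.sub_apply]
    rcases le_total 0 (z i) with h | h
    · rw [max_eq_left (by linarith)]
      nlinarith [mul_nonneg h (neg_nonneg.2 h2), sq_nonneg (z i)]
    · rw [max_eq_right (by linarith)]
      nlinarith [mul_nonneg (neg_nonneg.2 h) (by linarith : 0 ≤ γ + w i), sq_nonneg (z i)]

/-- The quadratic form of the Gram matrix: `vᵀ(MᵀM)v = ‖M v‖²`. -/
theorem dotProduct_gram {m n : ℕ} (M : Matrix (Fin m) (Fin n) ℝ) (v : Fin n → ℝ) :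
    v ⬝ᵥ (Mᵀ * M).mulVec v = ‖Matrix.toEuclideanLin M (WithLp.toLp 2 v)‖ ^ 2 := by
  rw [← Matrix.mulVec_mulVec, Matrix.dotProduct_mulVec, Matrix.vecMul_transpose,
    EuclideanSpace.real_norm_sq_eq]
  simp [dotProduct, Matrix.toEuclideanLin, Matrix.toLin'_apply, sq]

theorem dotProduct_self_eq_norm_sq {n : ℕ} (v : Fin n → ℝ) :
    v ⬝ᵥ v = ‖(WithLp.toLp 2 v : EuclideanSpace ℝ (Fin n))‖ ^ 2 := by
  rw [EuclideanSpace.real_norm_sq_eq]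
  simp [dotProduct, sq]

/-- The eigenvalues of `MᵀM` are at most `‖M‖²`, so their `sSup` is a genuine supremum rather than
the default value `0`. -/
theorem bddAbove_eigenvalues {m n : ℕ} (M : Matrix (Fin m) (Fin n) ℝ) :
    BddAbove {t : ℝ | ∃ v : Fin n → ℝ, v ≠ 0 ∧ (Mᵀ * M).mulVec v = t • v} := by
  let L := LinearMap.toContinuousLinearMap (Matrix.toEuclideanLin M)
  refine ⟨‖L‖ ^ 2, ?_⟩
  rintro t ⟨v, hv, h⟩
  have h1 := dotProduct_gram M v
  rw [h, dotProduct_smul, dotProduct_self_eq_norm_sq, smul_eq_mul] at h1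
  have hpos : 0 < ‖(WithLp.toLp 2 v : EuclideanSpace ℝ (Fin n))‖ := by
    rw [norm_pos_iff]
    simpa using hv
  have h2 : ‖Matrix.toEuclideanLin M (WithLp.toLp 2 v)‖ ≤ ‖L‖ * ‖WithLp.toLp 2 v‖ :=
    L.le_opNorm _
  have h3 := pow_le_pow_left₀ (norm_nonneg _) h2 2
  rw [← h1, mul_pow] at h3
  exact le_of_mul_le_mul_right h3 (by positivity)

/-- The Rayleigh bound `‖M x‖² ≤ λ_max(MᵀM) ‖x‖²`: the symmetric matrix `λ_max • 1 - MᵀM` has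
nonnegative eigenvalues, hence is positive semidefinite. -/
theorem norm_sq_toEuclideanLin_le {m n : ℕ} (M : Matrix (Fin m) (Fin n) ℝ)
    (x : EuclideanSpace ℝ (Fin n)) :
    ‖Matrix.toEuclideanLin M x‖ ^ 2 ≤
      sSup {t : ℝ | ∃ v : Fin n → ℝ, v ≠ 0 ∧ (Mᵀ * M).mulVec v = t • v} * ‖x‖ ^ 2 := by
  set S := sSup {t : ℝ | ∃ v : Fin n → ℝ, v ≠ 0 ∧ (Mᵀ * M).mulVec v = t • v} with hS
  have hH : (S • (1 : Matrix (Fin n) (Fin n) ℝ) - Mᵀ * M).IsHermitian := by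
    simp [Matrix.IsHermitian, Matrix.conjTranspose_eq_transpose_of_trivial]
  have hP : (S • (1 : Matrix (Fin n) (Fin n) ℝ) - Mᵀ * M).PosSemidef := by
    rw [hH.posSemidef_iff_eigenvalues_nonneg]
    intro i
    have h1 := hH.mulVec_eigenvectorBasis i
    have h2 : (hH.eigenvectorBasis i).ofLp ≠ 0 := by
      simpa using hH.eigenvectorBasis.orthonormal.ne_zero i
    rw [Matrix.sub_mulVec, Matrix.smul_mulVec, Matrix.one_mulVec] at h1
    have h3 : S - hH.eigenvalues i ≤ S := by
      refine le_csSup (bddAbove_eigenvalues M) ⟨_, h2, ?_⟩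
      rw [sub_smul, ← h1]
      abel
    simpa using h3
  have h := hP.dotProduct_mulVec_nonneg x.ofLp
  rw [star_trivial, Matrix.sub_mulVec, Matrix.smul_mulVec, Matrix.one_mulVec, dotProduct_sub,
    dotProduct_gram, dotProduct_smul, dotProduct_self_eq_norm_sq, smul_eq_mul] at h
  simpa using h

theorem norm_sq_convex_comb {E : Type*} [NormedAddCommGroup E] [InnerProductSpace ℝ E]
    (p q : E) {a b : ℝ} (hab : a + b = 1) :
    ‖a • p + b • q‖ ^ 2 = a * ‖p‖ ^ 2 + b * ‖q‖ ^ 2 - a * b * ‖p - q‖ ^ 2 := by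
  rw [norm_add_sq_real, norm_sub_sq_real, norm_smul, norm_smul, inner_smul_left, inner_smul_right,
    mul_pow, mul_pow, Real.norm_eq_abs, Real.norm_eq_abs, sq_abs, sq_abs]
  obtain rfl : b = 1 - a := by linarith
  simp only [conj_trivial]
  ring

/-- Sufficiency, for an arbitrary shift `c`. -/
theorem convexOn_of_le {m n : ℕ} {γ μ : ℝ} (hγ : 0 < γ) (hμ : 0 < μ)
    (M : Matrix (Fin m) (Fin n) ℝ) (c : EuclideanSpace ℝ (Fin m))
    (h : μ * sSup {t : ℝ | ∃ v : Fin n → ℝ, v ≠ 0 ∧ (Mᵀ * M).mulVec v = t • v} ≤ γ) :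
    ConvexOn ℝ Set.univ (fun x : EuclideanSpace ℝ (Fin n) =>
      ‖x‖ ^ 2 / 2 - μ * hingeEnv γ (Matrix.toEuclideanLin M x - c)) := by
  refine ⟨convex_univ, fun x _ y _ a b ha hb hab => ?_⟩
  set L := Matrix.toEuclideanLin M
  simp only [smul_eq_mul]
  have hquad : μ * ‖L (x - y)‖ ^ 2 / γ ≤ ‖x - y‖ ^ 2 := by
    rw [div_le_iff₀ hγ]
    have h1 := mul_le_mul_of_nonneg_left (norm_sq_toEuclideanLin_le M (x - y)) hμ.le
    have h2 := mul_le_mul_of_nonneg_right h (sq_nonneg ‖x - y‖)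
    linarith
  -- Each `z` is a test point for the infima at both endpoints, which bounds the envelope at the
  -- convex combination from below.
  have key : (a * hingeEnv γ (L x - c) + b * hingeEnv γ (L y - c)) -
      a * b * ‖L (x - y)‖ ^ 2 / (2 * γ) ≤ hingeEnv γ (L (a • x + b • y) - c) := by
    refine le_ciInf fun z => ?_
    have e : L (a • x + b • y) - c - z = a • (L x - c - z) + b • (L y - c - z) := by
      have hc : c + z = (a + b) • (c + z) := by rw [hab, one_smul]
      rw [map_add, map_smul, map_smul, sub_sub, hc]
      module
    have e2 : L (x - y) = (L x - c - z) - (L y - c - z) := by rw [map_sub]; abel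
    rw [e, norm_sq_convex_comb _ _ hab, e2]
    have h1 := mul_le_mul_of_nonneg_left (hingeEnv_le hγ (L x - c) z) ha
    have h2 := mul_le_mul_of_nonneg_left (hingeEnv_le hγ (L y - c) z) hb
    have h3 : (∑ i, max 0 (-(z i))) = a * (∑ i, max 0 (-(z i))) + b * (∑ i, max 0 (-(z i))) := by
      rw [← add_mul, hab, one_mul]
    rw [h3, sub_div, add_div, mul_div_assoc a, mul_div_assoc b]
    linarith
  rw [norm_sq_convex_comb _ _ hab]
  have h1 := mul_le_mul_of_nonneg_left key hμ.le
  have h2 := mul_le_mul_of_nonneg_left hquad (mul_nonneg ha hb)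
  have h3 : μ * (a * b * ‖L (x - y)‖ ^ 2 / (2 * γ)) =
      a * b * (μ * ‖L (x - y)‖ ^ 2 / γ) / 2 := by
    field_simp
  rw [mul_sub, h3] at h1
  linarith

/-- If some `x₀` is mapped into the interior of the box `(-γ, 0)ᵐ`, the objective is quadratic near
`x₀`, and the second difference along an eigenvector bounds the eigenvalue. -/
theorem eigenvalue_le_of_convexOn {m n : ℕ} {γ μ : ℝ} (hγ : 0 < γ) (hμ : 0 < μ)
    (M : Matrix (Fin m) (Fin n) ℝ) (c : EuclideanSpace ℝ (Fin m))
    (x₀ : EuclideanSpace ℝ (Fin n))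
    (hx₀ : ∀ i, -γ < (Matrix.toEuclideanLin M x₀ - c) i ∧ (Matrix.toEuclideanLin M x₀ - c) i < 0)
    (hF : ConvexOn ℝ Set.univ (fun x : EuclideanSpace ℝ (Fin n) =>
      ‖x‖ ^ 2 / 2 - μ * hingeEnv γ (Matrix.toEuclideanLin M x - c)))
    (t : ℝ) (v : Fin n → ℝ) (hv : v ≠ 0) (ht : (Mᵀ * M).mulVec v = t • v) : t ≤ γ / μ := by
  set L := Matrix.toEuclideanLin M
  set V : EuclideanSpace ℝ (Fin n) := WithLp.toLp 2 v
  have hVpos : 0 < ‖V‖ := by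
    rw [norm_pos_iff]
    simpa [V] using hv
  have hLV : t * ‖V‖ ^ 2 = ‖L V‖ ^ 2 := by
    rw [← dotProduct_gram M v, ht, dotProduct_smul, dotProduct_self_eq_norm_sq, smul_eq_mul]
  have hev : ∀ᶠ s : ℝ in nhds 0, ∀ i,
      -γ < (L x₀ - c) i + s * (L V) i ∧ (L x₀ - c) i + s * (L V) i < 0 := by
    rw [Filter.eventually_all]
    intro i
    have hc : Filter.Tendsto (fun s : ℝ => (L x₀ - c) i + s * (L V) i) (nhds 0)
        (nhds ((L x₀ - c) i)) := by
      have : Continuous (fun s : ℝ => (L x₀ - c) i + s * (L V) i) := by fun_prop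
      simpa using this.tendsto 0
    exact (hc.eventually_const_lt (hx₀ i).1).and (hc.eventually_lt_const (hx₀ i).2)
  obtain ⟨ε, hε, hball⟩ := Metric.eventually_nhds_iff.1 hev
  have hs : ∀ s : ℝ, |s| < ε → hingeEnv γ (L (x₀ + s • V) - c) =
      ‖(L x₀ - c) + s • L V‖ ^ 2 / (2 * γ) := by
    intro s hs
    have e : L (x₀ + s • V) - c = (L x₀ - c) + s • L V := by
      rw [map_add, map_smul]; abel
    rw [e]
    refine hingeEnv_eq hγ _ fun i => ?_
    have := hball (y := s) (by simpa using hs) i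
    simp only [PiLp.add_apply, PiLp.smul_apply, smul_eq_mul]
    exact ⟨this.1.le, this.2.le⟩
  set s := ε / 2 with hsdef
  have hs0 : 0 < s := by positivity
  have hp := hs s (by rw [abs_of_pos hs0]; linarith)
  have hm := hs (-s) (by rw [abs_neg, abs_of_pos hs0]; linarith)
  have h0 := hs 0 (by simpa using hε)
  have hmid := hF.2 (Set.mem_univ (x₀ + s • V)) (Set.mem_univ (x₀ + (-s) • V))
    (by norm_num : (0 : ℝ) ≤ 1 / 2) (by norm_num : (0 : ℝ) ≤ 1 / 2) (by norm_num)
  have e : (1 / 2 : ℝ) • (x₀ + s • V) + (1 / 2 : ℝ) • (x₀ + (-s) • V) = x₀ + (0 : ℝ) • V := by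
    module
  simp only [smul_eq_mul] at hmid
  rw [e, hp, hm, h0] at hmid
  simp only [norm_add_sq_real, inner_smul_right, norm_smul, mul_pow, Real.norm_eq_abs,
    sq_abs] at hmid
  rw [← hLV] at hmid
  have h1 : 0 ≤ s ^ 2 * ‖V‖ ^ 2 / 2 * (1 - μ * t / γ) := by
    have e1 : μ * t / γ = 2 * (μ * t / (2 * γ)) := by field_simp
    rw [e1]
    ring_nf at hmid ⊢
    linarith
  have h2 : 0 ≤ 1 - μ * t / γ := nonneg_of_mul_nonneg_right h1 (by positivity)
  rw [sub_nonneg, div_le_one hγ] at h2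
  rw [le_div_iff₀ hμ]
  linarith

/-- Proposition 8 of the paper, convexity condition for robust
classification with the Moreau-enhanced hinge loss.  With
`Ψ(z) = Σᵢ max(0, −zᵢ)`, `M₂ = [y₁a₁ ⋯ y_m a_m]ᵀ` and
`F(x) = ½‖x‖₂² − μ·(ᵞΨ)(M₂x − 1_m)`:
`F` is convex if `μ·λ_max(M₂ᵀM₂) ≤ γ`; and if `range M₂ = ℝᵐ` or `γ > 1`, then `F` is
convex if and only if `μ·λ_max(M₂ᵀM₂) ≤ γ`. -/
theorem me_hinge_convexity_condition (γ μ : ℝ) (hγ : 0 < γ) (hμ : 0 < μ)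
    (m n : ℕ) (hm : 0 < m) (hn : 0 < n)
    (y : Fin m → ℝ) (hy : ∀ i, y i = 1 ∨ y i = -1)
    (a : Fin m → EuclideanSpace ℝ (Fin n)) (ha : ∀ i, ‖a i‖ = 1) :
    ((μ * sSup {t : ℝ | ∃ v : Fin n → ℝ, v ≠ 0 ∧
          ((Matrix.of fun i j => y i * a i j)ᵀ * (Matrix.of fun i j => y i * a i j)).mulVec v
            = t • v} ≤ γ) →
        ConvexOn ℝ Set.univ (fun x : EuclideanSpace ℝ (Fin n) =>
          ‖x‖ ^ 2 / 2 -
            μ * ⨅ z : EuclideanSpace ℝ (Fin m),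
              ((∑ i, max 0 (-(z i))) +
                ‖Matrix.toEuclideanLin (Matrix.of fun i j => y i * a i j) x -
                    (WithLp.equiv 2 (Fin m → ℝ)).symm (fun _ => 1) - z‖ ^ 2 / (2 * γ)))) ∧
    ((Function.Surjective (Matrix.toEuclideanLin (Matrix.of fun i j => y i * a i j)) ∨
        1 < γ) →
      (ConvexOn ℝ Set.univ (fun x : EuclideanSpace ℝ (Fin n) =>
          ‖x‖ ^ 2 / 2 -
            μ * ⨅ z : EuclideanSpace ℝ (Fin m),
              ((∑ i, max 0 (-(z i))) +
                ‖Matrix.toEuclideanLin (Matrix.of fun i j => y i * a i j) x -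
                    (WithLp.equiv 2 (Fin m → ℝ)).symm (fun _ => 1) - z‖ ^ 2 / (2 * γ)))
        ↔ μ * sSup {t : ℝ | ∃ v : Fin n → ℝ, v ≠ 0 ∧
            ((Matrix.of fun i j => y i * a i j)ᵀ * (Matrix.of fun i j => y i * a i j)).mulVec v
              = t • v} ≤ γ)) := by
  refine ⟨fun h => convexOn_of_le hγ hμ _ _ h, fun hcase =>
    ⟨fun hF => ?_, fun h => convexOn_of_le hγ hμ _ _ h⟩⟩
  set M : Matrix (Fin m) (Fin n) ℝ := Matrix.of fun i j => y i * a i j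
  set c : EuclideanSpace ℝ (Fin m) := (WithLp.equiv 2 (Fin m → ℝ)).symm (fun _ => 1) with hc
  have hx : ∃ x₀, ∀ i, -γ < (Matrix.toEuclideanLin M x₀ - c) i ∧
      (Matrix.toEuclideanLin M x₀ - c) i < 0 := by
    rcases hcase with hsurj | hγ1
    · obtain ⟨x₀, hx₀⟩ := hsurj (WithLp.toLp 2 fun _ => 1 - γ / 2)
      refine ⟨x₀, fun i => ?_⟩
      rw [hx₀]
      simp only [hc, PiLp.sub_apply, WithLp.equiv_symm_apply]
      constructor <;> linarith
    · refine ⟨0, fun i => ?_⟩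
      simp only [hc, map_zero, PiLp.sub_apply, WithLp.equiv_symm_apply, PiLp.zero_apply]
      constructor <;> linarith
  obtain ⟨x₀, hx₀⟩ := hx
  rw [mul_comm, ← le_div_iff₀ hμ]
  refine Real.sSup_le ?_ (by positivity)
  rintro t ⟨v, hv, ht⟩
  exact eigenvalue_le_of_convexOn hγ hμ M c x₀ hx₀ hF t v hv ht
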